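/- Let G ⊊ ℝⁿ be a domain, x ∈ G, c > 0, and let γ be a rectifiable path in G starting at x. Let z, z' be points on γ with 0 < a := ℓ(γ[x,z]) ≤ b := ℓ(γ[x,z']), and suppose δ_G(w) ≥ ℓ(γ[x,w])/c for every w on the subpath γ[z,z']. Then the quasihyperbolic length of γ[z,z'] satisfies ℓ_k(γ[z,z']) ≤ c · log(b/a); in particular k_G(z,z') ≤ c · log(b/a). -/

import Mathlib

/-!
The length function `L(t) = ∫₀ᵗ ‖γ'‖` is monotone, and by Lebesgue differentiation `L' = ‖γ'‖`
almost everywhere. The hypothesis on the boundary distance therefore gives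
`‖γ'‖ / δ_G(γ) ≤ c L' / L = (c log L)'` almost everywhere on `[s, s']`. Since `c log L` is monotone,
the integral of its derivative is at most its increment `c log (b / a)`; only this inequality is
needed, so the absolute continuity of `log L` plays no role (`integral_div_le_log`).

Rectifiability is not part of `IsPathIn`, but it is recovered from `0 < a ≤ b`: the integral of a
non-integrable function is `0` by convention, so `‖γ'‖` is integrable on `[0, s']`.

For the bound on `kDist`, the subpath is reparametrized affinely on `[0, 1]`, which does not change
its quasihyperbolic length (`qhLen_reparam`), and quasihyperbolic lengths are nonnegative.
-/

open Set Metric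

noncomputable section

/-- The distance from `x` to the boundary of `G`. -/
def bdryDist {n : ℕ} (G : Set (EuclideanSpace ℝ (Fin n))) (x : EuclideanSpace ℝ (Fin n)) : ℝ :=
  Metric.infDist x (frontier G)

/-- The distance ratio metric `j_G`. -/
def jDist {n : ℕ} (G : Set (EuclideanSpace ℝ (Fin n))) (x y : EuclideanSpace ℝ (Fin n)) : ℝ :=
  Real.log (1 + dist x y / min (bdryDist G x) (bdryDist G y))

/-- Admissible rectifiable paths from `x` to `y` in `G`, parametrized on `[0,1]`. -/
def IsPathIn {n : ℕ} (G : Set (EuclideanSpace ℝ (Fin n))) (x y : EuclideanSpace ℝ (Fin n))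
    (γ : ℝ → EuclideanSpace ℝ (Fin n)) : Prop :=
  γ 0 = x ∧ γ 1 = y ∧ ContinuousOn γ (Icc 0 1) ∧ (∀ t ∈ Icc (0:ℝ) 1, γ t ∈ G) ∧
    DifferentiableOn ℝ γ (Icc 0 1)

/-- The Euclidean length of the subpath of `γ` from parameter `a` to `b`. -/
def pathLen {n : ℕ} (γ : ℝ → EuclideanSpace ℝ (Fin n)) (a b : ℝ) : ℝ :=
  ∫ t in a..b, ‖derivWithin γ (Icc 0 1) t‖

/-- The quasihyperbolic length in `G` of the subpath of `γ` from parameter `a` to `b`. -/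
def qhLen {n : ℕ} (G : Set (EuclideanSpace ℝ (Fin n))) (γ : ℝ → EuclideanSpace ℝ (Fin n))
    (a b : ℝ) : ℝ :=
  ∫ t in a..b, ‖derivWithin γ (Icc 0 1) t‖ / bdryDist G (γ t)

/-- The quasihyperbolic metric `k_G`. -/
def kDist {n : ℕ} (G : Set (EuclideanSpace ℝ (Fin n))) (x y : EuclideanSpace ℝ (Fin n)) : ℝ :=
  sInf {l | ∃ γ, IsPathIn G x y γ ∧ qhLen G γ 0 1 = l}

/-- `φ : [0,∞) → [0,∞)` is a strictly increasing homeomorphism with `φ 0 = 0`. -/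
def IncrHomeo (φ : ℝ → ℝ) : Prop :=
  φ 0 = 0 ∧ StrictMonoOn φ (Ici 0) ∧ ContinuousOn φ (Ici 0) ∧ φ '' Ici 0 = Ici 0

/-- `G` is `φ`-uniform. -/
def PhiUniform {n : ℕ} (G : Set (EuclideanSpace ℝ (Fin n))) (φ : ℝ → ℝ) : Prop :=
  ∀ x ∈ G, ∀ y ∈ G, kDist G x y ≤ φ (dist x y / min (bdryDist G x) (bdryDist G y))

/-- The twisted cone (John) condition with constant `c`. -/
def TwistedCone {n : ℕ} (G : Set (EuclideanSpace ℝ (Fin n))) (c : ℝ) : Prop :=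
  ∀ x ∈ G, ∀ y ∈ G, ∃ γ, IsPathIn G x y γ ∧
    ∀ s ∈ Icc (0:ℝ) 1, min (pathLen γ 0 s) (pathLen γ s 1) ≤ c * bdryDist G (γ s)

end

open MeasureTheory

/-- The analytic core: if `f ≥ 0` has primitive `L(t) = ∫₀ᵗ f` and `d ≥ L / c` on `[s, s']`, then
`f / d` is dominated almost everywhere by the derivative of the monotone function `c log L`. -/
lemma integral_div_le_log {f d : ℝ → ℝ} {c s s' : ℝ} (hc : 0 < c) (hs : 0 ≤ s) (hss' : s ≤ s')
    (hf : ∀ t, 0 ≤ f t) (hint : IntervalIntegrable f volume 0 s')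
    (ha : 0 < ∫ t in (0 : ℝ)..s, f t)
    (hd : ∀ w ∈ Icc s s', (∫ t in (0 : ℝ)..w, f t) / c ≤ d w) :
    ∫ t in s..s', f t / d t
      ≤ c * Real.log ((∫ t in (0 : ℝ)..s', f t) / ∫ t in (0 : ℝ)..s, f t) := by
  set L : ℝ → ℝ := fun w => ∫ t in (0 : ℝ)..w, f t with hL
  have hmono : MonotoneOn L (Icc s s') := by
    intro u hu v hv huv
    refine intervalIntegral.integral_mono_interval le_rfl (hs.trans hu.1) huv
      (Filter.Eventually.of_forall hf) (hint.mono_set ?_)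
    rw [uIcc_of_le (hs.trans hv.1), uIcc_of_le (hs.trans hss')]
    exact Icc_subset_Icc_right hv.2
  have hpos : ∀ w ∈ Icc s s', 0 < L w := fun w hw =>
    ha.trans_le (hmono (left_mem_Icc.2 hss') hw hw.1)
  have hFmono : MonotoneOn (fun w => c * Real.log (L w)) (uIcc s s') := by
    rw [uIcc_of_le hss']
    intro u hu v hv huv
    exact mul_le_mul_of_nonneg_left (Real.log_le_log (hpos u hu) (hmono hu hv huv)) hc.le
  have hlog : c * Real.log (L s' / L s) = c * Real.log (L s') - c * Real.log (L s) := by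
    rw [Real.log_div (hpos s' (right_mem_Icc.2 hss')).ne' ha.ne']
    ring
  have hinc : 0 ≤ c * Real.log (L s') - c * Real.log (L s) :=
    sub_nonneg.2 (hFmono left_mem_uIcc right_mem_uIcc hss')
  change _ ≤ c * Real.log (L s' / L s)
  rw [hlog]
  by_cases hq : IntervalIntegrable (fun t => f t / d t) volume s s'
  · have hle := hFmono.intervalIntegral_deriv_mem_uIcc
    rw [uIcc_of_le hinc] at hle
    refine le_trans (intervalIntegral.integral_mono_ae_restrict hss' hq
      hFmono.intervalIntegrable_deriv ?_) hle.2
    refine (ae_restrict_iff' measurableSet_Icc).2 ?_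
    filter_upwards [hint.ae_hasDerivAt_integral] with w hw hwI
    have h0 : w ∈ uIcc 0 s' := by
      rw [uIcc_of_le (hs.trans hss')]
      exact ⟨hs.trans hwI.1, hwI.2⟩
    have hder : HasDerivAt L (f w) w := hw h0 0 left_mem_uIcc
    have hLw := hpos w hwI
    rw [((hder.log hLw.ne').const_mul c).deriv]
    calc f w / d w ≤ f w / (L w / c) :=
          div_le_div_of_nonneg_left (hf w) (div_pos hLw hc) (hd w hwI)
      _ = c * (f w / L w) := by field_simp
  -- A non-integrable quotient has integral `0`.
  · rw [intervalIntegral.integral_undef hq]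
    exact hinc

/-- The affine reparametrization of a subpath on `[0, 1]` is an admissible path with the same
quasihyperbolic length; the degenerate case `s = s'` (a constant path) is included. -/
lemma qhLen_reparam {n : ℕ} {G : Set (EuclideanSpace ℝ (Fin n))} {x y : EuclideanSpace ℝ (Fin n)}
    {γ : ℝ → EuclideanSpace ℝ (Fin n)} (hγ : IsPathIn G x y γ) {s s' : ℝ}
    (hs : s ∈ Icc (0 : ℝ) 1) (hs' : s' ∈ Icc (0 : ℝ) 1) (hss' : s ≤ s') :
    IsPathIn G (γ s) (γ s') (γ ∘ fun t => s + (s' - s) * t) ∧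
      qhLen G (γ ∘ fun t => s + (s' - s) * t) 0 1 = qhLen G γ s s' := by
  obtain ⟨-, -, -, hG, hdiff⟩ := hγ
  have hmaps : MapsTo (fun t => s + (s' - s) * t) (Icc (0 : ℝ) 1) (Icc 0 1) := by
    intro t ht
    constructor
    · nlinarith [ht.1, hs.1, mul_nonneg (sub_nonneg.2 hss') ht.1]
    · nlinarith [ht.2, hs'.2, mul_nonneg (sub_nonneg.2 hss') (sub_nonneg.2 ht.2)]
  have hder : ∀ t ∈ Icc (0 : ℝ) 1, HasDerivWithinAt (γ ∘ fun t => s + (s' - s) * t)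
      ((s' - s) • derivWithin γ (Icc 0 1) (s + (s' - s) * t)) (Icc 0 1) t := by
    intro t ht
    refine HasDerivWithinAt.scomp t (hdiff _ (hmaps ht)).hasDerivWithinAt ?_ hmaps
    simpa using (((hasDerivAt_id t).const_mul (s' - s)).const_add s).hasDerivWithinAt
  refine ⟨⟨by simp, by simp, fun t ht => (hder t ht).continuousWithinAt,
    fun t ht => hG _ (hmaps ht), fun t ht => (hder t ht).differentiableWithinAt⟩, ?_⟩
  have hsub := intervalIntegral.mul_integral_comp_add_mul (a := 0) (b := 1)
    (f := fun t => ‖derivWithin γ (Icc 0 1) t‖ / bdryDist G (γ t)) (s' - s) s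
  simp only [mul_zero, add_zero, mul_one, add_sub_cancel] at hsub
  unfold qhLen
  rw [← hsub, ← intervalIntegral.integral_const_mul]
  refine intervalIntegral.integral_congr fun t ht => ?_
  rw [uIcc_of_le zero_le_one] at ht
  simp only [(hder t ht).derivWithin (uniqueDiffOn_Icc_zero_one t ht), norm_smul, Real.norm_eq_abs,
    abs_of_nonneg (sub_nonneg.2 hss'), Function.comp_apply, mul_div_assoc]

lemma kDist_le_qhLen {n : ℕ} {G : Set (EuclideanSpace ℝ (Fin n))}
    {x y : EuclideanSpace ℝ (Fin n)} {γ : ℝ → EuclideanSpace ℝ (Fin n)} (hγ : IsPathIn G x y γ) :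
    kDist G x y ≤ qhLen G γ 0 1 := by
  refine csInf_le ⟨0, ?_⟩ ⟨γ, hγ, rfl⟩
  rintro _ ⟨σ, -, rfl⟩
  exact intervalIntegral.integral_nonneg zero_le_one fun t _ =>
    div_nonneg (norm_nonneg _) infDist_nonneg

/-- If along a subpath the boundary distance dominates `ℓ(γ[x,·])/c`,
then the quasihyperbolic length of the subpath is at most `c log(b/a)`. -/
theorem qhLen_le_of_bdryDist_ge
    (n : ℕ) (G : Set (EuclideanSpace ℝ (Fin n)))
    (hGopen : IsOpen G) (hGconn : IsConnected G) (hGproper : G ≠ Set.univ)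
    (x y : EuclideanSpace ℝ (Fin n)) (hx : x ∈ G)
    (γ : ℝ → EuclideanSpace ℝ (Fin n)) (hγ : IsPathIn G x y γ)
    (c : ℝ) (hc : 0 < c)
    (s s' : ℝ) (hs : s ∈ Set.Icc (0:ℝ) 1) (hs' : s' ∈ Set.Icc (0:ℝ) 1) (hss' : s ≤ s')
    (ha : 0 < pathLen γ 0 s) (hab : pathLen γ 0 s ≤ pathLen γ 0 s')
    (hδ : ∀ w ∈ Set.Icc s s', pathLen γ 0 w / c ≤ bdryDist G (γ w)) :
    qhLen G γ s s' ≤ c * Real.log (pathLen γ 0 s' / pathLen γ 0 s) ∧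
      kDist G (γ s) (γ s') ≤ c * Real.log (pathLen γ 0 s' / pathLen γ 0 s) := by
  have hint : IntervalIntegrable (fun t => ‖derivWithin γ (Icc 0 1) t‖) volume 0 s' := by
    by_contra h
    have h0 : pathLen γ 0 s' = 0 := intervalIntegral.integral_undef h
    linarith
  have hq : qhLen G γ s s' ≤ c * Real.log (pathLen γ 0 s' / pathLen γ 0 s) :=
    integral_div_le_log hc hs.1 hss' (fun _ => norm_nonneg _) hint ha hδ
  obtain ⟨hpath, hlen⟩ := qhLen_reparam hγ hs hs' hss'
  exact ⟨hq, (kDist_le_qhLen hpath).trans (hlen.trans_le hq)⟩
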